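/- arXiv:2208.01628 — 3 statements merged into one kernel-verified Lean document; each statement's English description precedes it below -/
import Mathlib

section
/- Let ω = e^{2πi/3}, Λ = ℤω ⊕ ℤ, θ as below, z(k) := √3·k/(4πi), F_k(z) := e^{(i/2)(z−conj(z))k}·θ(z−z(k))/θ(z) for z ∉ Λ, and c(k) := 2πi·θ(z(k))/θ′(0). Then for every k ∈ ℂ the function F_k is locally Lebesgue-integrable on ℂ, and for every smooth compactly supported χ : ℂ → ℂ one has ∫_ℂ F_k(z)·(2i·∂_{z̄}χ(z) + k·χ(z)) dm(z) = c(k)·∑_{γ∈Λ} χ(γ), where ∂_{z̄} = (∂_x + i∂_y)/2, dm is Lebesgue measure on ℂ ≅ ℝ², and the sum on the right has finitely many nonzero terms. Equivalently, in the sense of distributions, (2D_{z̄} + k)F_k = c(k)·∑_{γ∈Λ} δ_γ with 2D_{z̄} = −2i∂_{z̄}. -/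
open Complex MeasureTheory

noncomputable section

/-- `ω = e^{2πi/3}`. -/
def ω : ℂ := Complex.exp (2 * (Real.pi : ℂ) * Complex.I / 3)

/-- The Jacobi theta function `θ₁(z|ω)`. -/
def θ (z : ℂ) : ℂ :=
  -∑' n : ℤ, Complex.exp ((Real.pi : ℂ) * Complex.I * ((n : ℂ) + 1/2)^2 * ω
      + 2 * (Real.pi : ℂ) * Complex.I * ((n : ℂ) + 1/2) * (z + 1/2))

/-- `z(k) = √3 k/(4πi)`. -/
def zmap (k : ℂ) : ℂ := (Real.sqrt 3 : ℂ) * k / (4 * (Real.pi : ℂ) * Complex.I)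

/-- `F_k(z) = e^{(i/2)(z - z̄)k} θ(z - z(k))/θ(z)`. -/
def F (k z : ℂ) : ℂ :=
  Complex.exp ((Complex.I / 2) * (z - (starRingEnd ℂ) z) * k) * θ (z - zmap k) / θ z

/-- `c(k) = 2πi θ(z(k))/θ'(0)`. -/
def c (k : ℂ) : ℂ := 2 * (Real.pi : ℂ) * Complex.I * θ (zmap k) / deriv θ 0

/-- The antiholomorphic Wirtinger derivative `∂_{z̄} χ = (∂_x χ + i ∂_y χ)/2`. -/
def dbar (χ : ℂ → ℂ) (z : ℂ) : ℂ :=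
  (fderiv ℝ χ z 1 + Complex.I * fderiv ℝ χ z Complex.I) / 2

lemma ω_eq : ω = -1/2 + (Real.sqrt 3 / 2 : ℝ) * Complex.I := by
  have h : (2 * (Real.pi : ℂ) * Complex.I / 3) = ((2 * Real.pi / 3 : ℝ) : ℂ) * Complex.I := by
    push_cast; ring
  rw [ω, h, Complex.exp_mul_I, ← Complex.ofReal_cos, ← Complex.ofReal_sin]
  have e : 2 * Real.pi / 3 = Real.pi - Real.pi / 3 := by ring
  rw [e, Real.cos_pi_sub, Real.sin_pi_sub, Real.cos_pi_div_three, Real.sin_pi_div_three]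
  push_cast; ring

lemma ω_re : ω.re = -1/2 := by rw [ω_eq]; simp
lemma ω_im : ω.im = Real.sqrt 3 / 2 := by rw [ω_eq]; simp
lemma ω_im_pos : 0 < ω.im := by rw [ω_im]; positivity

/-- general term -/
def tm (n : ℤ) (z : ℂ) : ℂ := Complex.exp ((Real.pi : ℂ) * Complex.I * ((n : ℂ) + 1/2)^2 * ω
      + 2 * (Real.pi : ℂ) * Complex.I * ((n : ℂ) + 1/2) * (z + 1/2))

lemma tm_eq (n : ℤ) (z : ℂ) : tm n z =
    Complex.exp (Real.pi * Complex.I * (ω / 4 + z + 1/2)) * jacobiTheta₂_term n (z + 1/2 + ω/2) ω := by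
  rw [tm, jacobiTheta₂_term, ← Complex.exp_add]
  congr 1; ring

lemma hasSum_tm (z : ℂ) : HasSum (fun n => tm n z) (-θ z) := by
  have h := (hasSum_jacobiTheta₂_term (z + 1/2 + ω/2) ω_im_pos).mul_left
    (Complex.exp (Real.pi * Complex.I * (ω / 4 + z + 1/2)))
  simp_rw [← tm_eq] at h
  have : -θ z = ∑' n, tm n z := by rw [θ, neg_neg]; rfl
  rw [this]
  exact h.summable.hasSum

lemma θ_eq (z : ℂ) : θ z = - (Complex.exp (Real.pi * Complex.I * (ω / 4 + z + 1/2)) *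
    jacobiTheta₂ (z + 1/2 + ω/2) ω) := by
  have h := (hasSum_jacobiTheta₂_term (z + 1/2 + ω/2) ω_im_pos).mul_left
    (Complex.exp (Real.pi * Complex.I * (ω / 4 + z + 1/2)))
  simp_rw [← tm_eq] at h
  rw [h.unique (hasSum_tm z), neg_neg]

lemma θ_diff : Differentiable ℂ θ := by
  have : θ = fun z => - (Complex.exp (Real.pi * Complex.I * (ω / 4 + z + 1/2)) *
    jacobiTheta₂ (z + 1/2 + ω/2) ω) := funext θ_eq
  rw [this]
  intro z
  have h := differentiableAt_jacobiTheta₂_fst (z + 1/2 + ω/2) ω_im_pos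
  have h2 : DifferentiableAt ℂ (fun z => jacobiTheta₂ (z + 1/2 + ω/2) ω) z :=
    DifferentiableAt.comp (f := fun z : ℂ => z + 1/2 + ω/2) z h (by fun_prop)
  fun_prop

lemma θ_add_one (z : ℂ) : θ (z + 1) = - θ z := by
  rw [θ_eq, θ_eq, show z + 1 + 1/2 + ω/2 = (z + 1/2 + ω/2) + 1 by ring, jacobiTheta₂_add_left,
    show (Real.pi * Complex.I * (ω / 4 + (z + 1) + 1/2)) =
      (Real.pi * Complex.I * (ω / 4 + z + 1/2)) + Real.pi * Complex.I by ring, Complex.exp_add,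
    Complex.exp_pi_mul_I]
  ring

lemma θ_add_ω (z : ℂ) : θ (z + ω) = - Complex.exp (-Real.pi * Complex.I * (ω + 2 * z)) * θ z := by
  rw [θ_eq, θ_eq, show z + ω + 1/2 + ω/2 = (z + 1/2 + ω/2) + ω by ring, jacobiTheta₂_add_left',
    show (Real.pi * Complex.I * (ω / 4 + (z + ω) + 1/2)) =
      (Real.pi * Complex.I * (ω / 4 + z + 1/2)) + Real.pi * Complex.I * ω by ring,
    show -Real.pi * Complex.I * (ω + 2 * (z + 1 / 2 + ω / 2)) =
      -Real.pi * Complex.I * (ω + 2 * z) + (-(Real.pi * Complex.I)) + (-(Real.pi * Complex.I * ω)) by ring,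
    Complex.exp_add, Complex.exp_add, Complex.exp_add, Complex.exp_neg (Real.pi * Complex.I), Complex.exp_pi_mul_I,
    Complex.exp_neg (Real.pi * Complex.I * ω)]
  have := Complex.exp_ne_zero (Real.pi * Complex.I * ω)
  field_simp

lemma θ_neg (z : ℂ) : θ (-z) = - θ z := by
  have h1 := (hasSum_tm (-z)).mul_left (-1)
  have h2 := (Equiv.hasSum_iff (Equiv.subLeft (-1 : ℤ))).2 (hasSum_tm z)
  have : ∀ n, ((fun n => tm n z) ∘ (Equiv.subLeft (-1 : ℤ))) n = -1 * tm n (-z) := by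
    intro n
    simp only [Function.comp, Equiv.subLeft_apply, tm]
    have e : ∀ x, -1 * Complex.exp x = Complex.exp (x + (-(2 * n + 1 : ℤ) * (Real.pi * Complex.I))) := by
      intro x
      rw [Complex.exp_add, ← Int.cast_neg, Complex.exp_int_mul, Complex.exp_pi_mul_I, Odd.neg_one_zpow, mul_comm]
      exact Odd.neg ⟨n, rfl⟩
    rw [e]
    congr 1
    push_cast
    ring
  have := h2.unique (by simpa only [funext this] using h1)
  linear_combination -this

lemma s_bound (w : ℂ) (hw : w ≠ 0) (M : ℝ) (hM : 1 ≤ M) (h1 : ‖w‖^2 ≤ M) (h2 : ‖w⁻¹‖^2 ≤ M) (n : ℕ) :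
    ‖w^(2*n+1) - w⁻¹^(2*n+1)‖ ≤ 3^n * M^n * ‖w - w⁻¹‖ := by
  have : ‖w^(2*n+1) - w⁻¹^(2*n+1)‖ ≤ (2 * n + 1) * M^n * ‖w - w⁻¹‖ := by
    induction n with
    | zero => simp
    | succ n ih =>
      have e : w^(2*(n+1)+1) - w⁻¹^(2*(n+1)+1) = (w^(2*n+1) - w⁻¹^(2*n+1)) +
          (w^(2*(n+1)) + w⁻¹^(2*(n+1))) * (w - w⁻¹) := by
        have : w * w⁻¹ = 1 := mul_inv_cancel₀ hw
        generalize w⁻¹ = u at *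
        have a : w^(2*(n+1)) * u = w^(2*n+1) := by
          rw [show 2*(n+1) = 2*n+1+1 by ring, pow_succ, mul_assoc, this, mul_one]
        have b : u^(2*(n+1)) * w = u^(2*n+1) := by
          rw [show 2*(n+1) = 2*n+1+1 by ring, pow_succ, mul_assoc, mul_comm u w, this, mul_one]
        rw [pow_succ w (2*(n+1)), pow_succ u (2*(n+1))]
        linear_combination a - b
      rw [e]
      refine (norm_add_le _ _).trans ?_
      rw [norm_mul]
      have b1 : ‖w^(2*(n+1)) + w⁻¹^(2*(n+1))‖ ≤ 2 * M^(n+1) := by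
        refine (norm_add_le _ _).trans ?_
        rw [norm_pow, norm_pow, pow_mul, pow_mul, two_mul]
        gcongr
      have b2 : M^n ≤ M^(n+1) := pow_le_pow_right₀ hM (by lia)
      have : (2 * (n:ℝ) + 1) * M^n ≤ (2 * n + 1) * M^(n+1) := by gcongr
      push_cast
      calc _ ≤ (2 * (n:ℝ) + 1) * M^n * ‖w - w⁻¹‖ + 2 * M^(n+1) * ‖w - w⁻¹‖ := by gcongr
        _ ≤ (2 * (n:ℝ) + 1) * M^(n+1) * ‖w - w⁻¹‖ + 2 * M^(n+1) * ‖w - w⁻¹‖ := by gcongr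
        _ = _ := by ring
  refine this.trans ?_
  have : (2 * (n:ℝ) + 1) ≤ 3^n := by
    have := one_add_mul_le_pow (a := (2:ℝ)) (by norm_num) n
    norm_num at this; linarith
  gcongr

lemma q_norm (x : ℝ) : ‖Complex.exp ((Real.pi : ℂ) * Complex.I * (x : ℂ)^2 * ω)‖ =
    Real.exp (-(Real.pi * Real.sqrt 3 / 2) * x^2) := by
  rw [Complex.norm_exp, ω_eq]
  congr 1
  simp [← Complex.ofReal_pow]
  ring

lemma pair_eq (n : ℕ) (z : ℂ) : tm n z + tm (-(n+1 : ℤ)) z =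
    Complex.exp ((Real.pi : ℂ) * Complex.I * ((n + 1/2 : ℝ) : ℂ)^2 * ω) * (Complex.I * (-1)^n) *
      (Complex.exp (Real.pi * Complex.I * z)^(2*n+1) - (Complex.exp (Real.pi * Complex.I * z))⁻¹^(2*n+1)) := by
  have hI : Complex.exp (Real.pi * Complex.I / 2) = Complex.I := by
    rw [show (Real.pi * Complex.I / 2 : ℂ) = Real.pi / 2 * Complex.I by ring, Complex.exp_pi_div_two_mul_I]
  have hI' : Complex.exp (-(Real.pi * Complex.I / 2)) = -Complex.I := by
    rw [Complex.exp_neg, hI, Complex.inv_I]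
  have h1 : Complex.I * (-1)^n = Complex.exp ((2*n+1 : ℕ) * (Real.pi * Complex.I / 2)) := by
    rw [Complex.exp_nat_mul, hI, pow_succ, pow_mul, Complex.I_sq, mul_comm]
  have h2 : Complex.I * (-1)^n = - Complex.exp ((2*n+1 : ℕ) * (-(Real.pi * Complex.I / 2))) := by
    rw [Complex.exp_nat_mul, hI', pow_succ, pow_mul, neg_sq, Complex.I_sq]; ring
  rw [mul_sub]
  conv_rhs => 
    arg 1
    rw [h1]
  rw [h2, ← Complex.exp_neg, ← Complex.exp_nat_mul, ← Complex.exp_nat_mul, mul_neg, neg_mul, sub_neg_eq_add,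
    ← Complex.exp_add, ← Complex.exp_add, ← Complex.exp_add, ← Complex.exp_add, tm, tm]
  congr 2 <;> push_cast <;> ring

lemma θ_lower : ∃ C > 0, ∀ z : ℂ, |z.im| ≤ Real.sqrt 3 / 4 →
    C * ‖Complex.exp (Real.pi * Complex.I * z) - (Complex.exp (Real.pi * Complex.I * z))⁻¹‖ ≤ ‖θ z‖ := by
  set a := Real.pi * Real.sqrt 3 / 2 with ha
  have hs : (1.7:ℝ) ≤ Real.sqrt 3 := Real.le_sqrt_of_sq_le (by norm_num)
  have ha2 : 2 ≤ a := by nlinarith [Real.pi_gt_three]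
  have hr : Real.exp (-a) ≤ 1/7 := by
    rw [Real.exp_neg, one_div]
    apply inv_anti₀ (by norm_num)
    have := Real.exp_one_gt_d9
    calc (7:ℝ) ≤ Real.exp 1 * Real.exp 1 := by nlinarith
      _ = Real.exp 2 := by rw [← Real.exp_add]; norm_num
      _ ≤ _ := Real.exp_le_exp.2 ha2
  refine ⟨Real.exp (-a/4) / 4, by positivity, fun z hz => ?_⟩
  set w := Complex.exp (Real.pi * Complex.I * z) with hw
  have hsum := (hasSum_tm z).nat_add_neg_add_one
  set A := Real.exp (-a/4) * ‖w - w⁻¹‖ with hA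
  have hwn : ‖w‖ = Real.exp (-(Real.pi * z.im)) := by
    rw [hw, Complex.norm_exp]; congr 1; simp
  have hz' := abs_le.1 hz
  have hpi := Real.pi_pos
  have h1 : ‖w‖^2 ≤ Real.exp a := by
    rw [hwn, ← Real.exp_nat_mul]; apply Real.exp_le_exp.2
    push_cast; nlinarith
  have h2 : ‖w⁻¹‖^2 ≤ Real.exp a := by
    rw [norm_inv, hwn, ← Real.exp_neg, ← Real.exp_nat_mul]; apply Real.exp_le_exp.2
    push_cast; nlinarith
  have hM : 1 ≤ Real.exp a := Real.one_le_exp (by linarith)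
  have hnorm : ∀ n : ℕ, ‖tm n z + tm (-(n+1 : ℤ)) z‖ =
      Real.exp (-a * (n+1/2)^2) * ‖w^(2*n+1) - w⁻¹^(2*n+1)‖ := by
    intro n
    rw [pair_eq, norm_mul, norm_mul, q_norm]
    simp [ha, hw]
  have hb : ∀ n : ℕ, ‖tm n z + tm (-(n+1 : ℤ)) z‖ ≤ A * (3/7)^n := by
    intro n
    rw [hnorm]
    have := s_bound w (Complex.exp_ne_zero _) _ hM h1 h2 n
    calc _ ≤ Real.exp (-a * (n+1/2)^2) * (3^n * Real.exp a^n * ‖w - w⁻¹‖) := by gcongr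
      _ = (Real.exp (-a * (n+1/2)^2) * Real.exp a^n) * 3^n * ‖w - w⁻¹‖ := by ring
      _ ≤ (Real.exp (-a/4) * Real.exp (-a)^n) * 3^n * ‖w - w⁻¹‖ := by
        refine mul_le_mul_of_nonneg_right (mul_le_mul_of_nonneg_right ?_ (by positivity)) (norm_nonneg _)
        rw [← Real.exp_nat_mul, ← Real.exp_nat_mul, ← Real.exp_add, ← Real.exp_add]
        apply Real.exp_le_exp.2
        have : (n:ℝ) ≤ (n:ℝ)^2 := by
          rcases Nat.eq_zero_or_pos n with h | h
          · simp [h]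
          · have : (1:ℝ) ≤ n := by exact_mod_cast h
            nlinarith
        nlinarith
      _ ≤ (Real.exp (-a/4) * (1/7)^n) * 3^n * ‖w - w⁻¹‖ := by gcongr
      _ = A * (3/7)^n := by rw [hA, div_pow, div_pow]; ring
  have h0 : ‖tm ((0:ℕ):ℤ) z + tm (-(((0:ℕ):ℤ)+1 : ℤ)) z‖ = A := by
    rw [hnorm, hA]; simp; left; ring
  have hg : HasSum (fun n : ℕ => A * (3/7 : ℝ)^(n+1)) (A * (3/4)) := by
    have := (hasSum_geometric_of_lt_one (r := (3/7:ℝ)) (by norm_num) (by norm_num)).mul_left (A * (3/7))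
    have e1 : A * (3/7) * (1 - 3/7)⁻¹ = A * (3/4) := by
      generalize A = A'
      rw [mul_assoc]; norm_num
    have e2 : (fun n : ℕ => A * (3/7 : ℝ)^(n+1)) = fun n : ℕ => A * (3/7) * (3/7)^n := by
      funext n; rw [pow_succ]; ring
    rwa [e2, ← e1]
  have htail := (hasSum_nat_add_iff' 1).2 hsum
  have hle := htail.tsum_eq ▸ tsum_of_norm_bounded hg (fun n => hb (n+1))
  simp only [Finset.sum_range_one] at hle
  have h3 := norm_sub_norm_le (tm ((0:ℕ):ℤ) z + tm (-(((0:ℕ):ℤ)+1 : ℤ)) z) 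
    (-(-θ z - (tm ((0:ℕ):ℤ) z + tm (-(((0:ℕ):ℤ)+1 : ℤ)) z)))
  rw [h0, norm_neg] at h3
  have e : (tm ((0:ℕ):ℤ) z + tm (-(((0:ℕ):ℤ)+1 : ℤ)) z) - 
    (-(-θ z - (tm ((0:ℕ):ℤ) z + tm (-(((0:ℕ):ℤ)+1 : ℤ)) z))) = -θ z := by ring
  rw [e, norm_neg] at h3
  rw [hA] at *
  linarith

lemma θ_zero : θ 0 = 0 := by
  have := θ_neg 0
  rw [neg_zero] at this
  exact self_eq_neg.1 this

lemma θ_deriv_ne : deriv θ 0 ≠ 0 := by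
  intro h0
  obtain ⟨C, hC, h⟩ := θ_lower
  have h1 : HasDerivAt θ 0 0 := (θ_diff 0).hasDerivAt.congr_deriv h0
  let s : ℂ → ℂ := fun z => Complex.exp (Real.pi * Complex.I * z) - (Complex.exp (Real.pi * Complex.I * z))⁻¹
  have h2 : HasDerivAt s (2 * Real.pi * Complex.I) 0 := by
    have a : HasDerivAt (fun z : ℂ => Complex.exp (Real.pi * Complex.I * z)) (Real.pi * Complex.I) 0 := by
      simpa using ((hasDerivAt_id (0:ℂ)).const_mul (Real.pi * Complex.I)).cexp
    have b := a.sub (a.inv (Complex.exp_ne_zero _))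
    refine (b.congr_deriv ?_)
    simp; ring
  have t1 := (hasDerivAt_iff_tendsto_slope.1 h1).norm
  have t2 := ((hasDerivAt_iff_tendsto_slope.1 h2).norm).const_mul C
  have := le_of_tendsto_of_tendsto t2 t1 (by
    have hn : {z : ℂ | |z.im| < Real.sqrt 3 / 4} ∈ nhds (0:ℂ) := by
      apply (isOpen_lt (by fun_prop) (by fun_prop)).mem_nhds
      simp
    filter_upwards [mem_nhdsWithin_of_mem_nhds hn] with z hz
    have := h z (le_of_lt hz)
    have hs0 : s 0 = 0 := by simp [s]
    simp only [slope_def_field, hs0, θ_zero, sub_zero, norm_div]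
    rw [← mul_div_assoc]
    gcongr)
  simp at this
  have h3 : 0 < C * (2 * |Real.pi|) := by have := Real.pi_pos; positivity
  linarith

lemma θ_add_ω_zero (z : ℂ) (h : θ z = 0) : θ (z + ω) = 0 := by rw [θ_add_ω, h, mul_zero]

lemma θ_zero_shift (z : ℂ) (n : ℤ) : θ (z + n * ω) = 0 ↔ θ z = 0 := by
  have hs : ∀ z, θ (z + ω) = 0 ↔ θ z = 0 := by
    intro z; rw [θ_add_ω]; simp [Complex.exp_ne_zero]
  have : Function.Periodic (fun z => θ z = 0) ω := fun z => propext (hs z)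
  exact iff_of_eq (this.int_mul n z)

lemma θ_zeros (z : ℂ) (h : θ z = 0) : ∃ p : ℤ × ℤ, z = p.1 * ω + p.2 := by
  obtain ⟨C, hC, hl⟩ := θ_lower
  set n : ℤ := round (z.im / (Real.sqrt 3 / 2)) with hn
  have h1 := abs_sub_round (z.im / (Real.sqrt 3 / 2))
  rw [← hn] at h1
  have hs : 0 < Real.sqrt 3 := by positivity
  have h2 : |(z + (-n : ℤ) * ω).im| ≤ Real.sqrt 3 / 4 := by
    have : (z + (-n : ℤ) * ω).im = (z.im / (Real.sqrt 3 / 2) - n) * (Real.sqrt 3 / 2) := by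
      simp [ω_im]; field_simp; ring
    rw [this, abs_mul, abs_of_pos (show 0 < Real.sqrt 3 / 2 by positivity)]
    nlinarith
  have h3 := (θ_zero_shift z (-n)).2 h
  have h4 := hl _ h2
  rw [h3, norm_zero] at h4
  have h5 : ‖Complex.exp (Real.pi * Complex.I * (z + (-n : ℤ) * ω)) -
      (Complex.exp (Real.pi * Complex.I * (z + (-n : ℤ) * ω)))⁻¹‖ = 0 := 
    le_antisymm (by by_contra hc; push Not at hc; have := mul_pos hC hc; linarith) (norm_nonneg _)
  rw [norm_eq_zero, sub_eq_zero, ← Complex.exp_neg, Complex.exp_eq_exp_iff_exists_int] at h5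
  obtain ⟨m, hm⟩ := h5
  refine ⟨(n, m), ?_⟩
  have hpi : (Real.pi : ℂ) * Complex.I ≠ 0 := by simp [Real.pi_ne_zero]
  have : (2 * (Real.pi * Complex.I)) * (z - n * ω - m) = 0 := by
    push_cast at hm
    linear_combination hm
  have := (mul_eq_zero.1 this).resolve_left (by simp [Real.pi_ne_zero])
  linear_combination this

lemma F_add_one (k z : ℂ) : F k (z + 1) = F k z := by
  unfold F
  rw [show z + 1 - zmap k = z - zmap k + 1 by ring, θ_add_one, θ_add_one]
  simp [neg_div_neg_eq]

lemma F_add_ω (k z : ℂ) : F k (z + ω) = F k z := by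
  unfold F
  rw [show z + ω - zmap k = z - zmap k + ω by ring, θ_add_ω, θ_add_ω]
  have hc : (starRingEnd ℂ) (z + ω) = (starRingEnd ℂ) z + ω - Real.sqrt 3 * Complex.I := by
    rw [map_add]
    have : (starRingEnd ℂ) ω = ω - Real.sqrt 3 * Complex.I := by
      apply Complex.ext <;> simp [ω_im]
      ring
    rw [this]; ring
  have hz : 2 * Real.pi * Complex.I * zmap k = Real.sqrt 3 * k / 2 := by
    unfold zmap
    have : (Real.pi : ℂ) ≠ 0 := by simp [Real.pi_ne_zero]
    field_simp
    ring
  rw [hc]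
  have e1 : Complex.I / 2 * (z + ω - ((starRingEnd ℂ) z + ω - Real.sqrt 3 * Complex.I)) * k
    = Complex.I / 2 * (z - (starRingEnd ℂ) z) * k + (- (Real.sqrt 3 * k / 2)) := by
    linear_combination (Real.sqrt 3 * k / 2) * Complex.I_sq
  have e2 : -Real.pi * Complex.I * (ω + 2 * (z - zmap k)) =
    -Real.pi * Complex.I * (ω + 2 * z) + Real.sqrt 3 * k / 2 := by
    linear_combination hz
  rw [e1, e2, Complex.exp_add, Complex.exp_add, Complex.exp_neg]
  have a1 := Complex.exp_ne_zero (Real.sqrt 3 * k / 2)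
  have a2 := Complex.exp_ne_zero (-Real.pi * Complex.I * (ω + 2 * z))
  rw [neg_mul, neg_mul (Complex.exp _) (θ z), mul_neg, neg_div_neg_eq]
  generalize Complex.exp (Real.sqrt 3 * k / 2) = a at *
  generalize Complex.exp (-Real.pi * Complex.I * (ω + 2 * z)) = b at *
  rw [show Complex.exp (Complex.I / 2 * (z - (starRingEnd ℂ) z) * k) * a⁻¹ * (b * a * θ (z - zmap k))
    = b * (Complex.exp (Complex.I / 2 * (z - (starRingEnd ℂ) z) * k) * θ (z - zmap k)) * (a⁻¹ * a) by ring,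
    inv_mul_cancel₀ a1, mul_one, mul_div_mul_left _ _ a2]

/-- lattice points -/
def lat (p : ℤ × ℤ) : ℂ := (p.1 : ℂ) * ω + (p.2 : ℂ)

lemma F_add_lat (k z : ℂ) (p : ℤ × ℤ) : F k (z + lat p) = F k z := by
  have h1 : Function.Periodic (F k) 1 := F_add_one k
  have h2 : Function.Periodic (F k) ω := F_add_ω k
  rw [lat, ← add_assoc]
  have := h1.int_mul p.2 (z + p.1 * ω)
  rw [mul_one] at this
  rw [this]
  exact h2.int_mul p.1 z

lemma lat_normSq (p : ℤ × ℤ) : ‖lat p‖^2 = ((p.1^2 - p.1 * p.2 + p.2^2 : ℤ) : ℝ) := by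
  rw [← Complex.normSq_eq_norm_sq, Complex.normSq_apply]
  simp [lat, ω_re, ω_im]
  have : Real.sqrt 3 ^ 2 = 3 := Real.sq_sqrt (by norm_num)
  linear_combination (p.1^2/4 : ℝ) * this

lemma lat_sub (p q : ℤ × ℤ) : lat p - lat q = lat (p - q) := by
  simp [lat]; ring

lemma lat_norm_ge (p : ℤ × ℤ) (hp : p ≠ 0) : 1 ≤ ‖lat p‖ := by
  have h : (1:ℤ) ≤ p.1^2 - p.1 * p.2 + p.2^2 := by
    by_contra hc
    push Not at hc
    apply hp
    have h1 : p.2 = 0 := by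
      by_contra h
      have : 0 < p.2^2 := by positivity
      nlinarith [sq_nonneg (2 * p.1 - p.2)]
    have h2 : p.1 = 0 := by
      by_contra h
      have : 0 < p.1^2 := by positivity
      nlinarith [sq_nonneg (2 * p.2 - p.1)]
    exact Prod.ext h2 h1
  have h' : (1:ℝ) ≤ ‖lat p‖^2 := by rw [lat_normSq]; exact_mod_cast h
  nlinarith [norm_nonneg (lat p)]

lemma lat_finite (K : Set ℂ) (hK : IsCompact K) : {p | lat p ∈ K}.Finite := by
  obtain ⟨R, hR⟩ := hK.isBounded.subset_closedBall 0
  obtain ⟨N, hN⟩ := exists_nat_ge R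
  have hf : (Set.Icc (-(2 * N : ℤ)) (2 * N) ×ˢ Set.Icc (-(2 * N : ℤ)) (2 * N)).Finite :=
    (Set.finite_Icc _ _).prod (Set.finite_Icc _ _)
  refine hf.subset fun p hp => ?_
  have h1 := hR hp
  rw [mem_closedBall_zero_iff] at h1
  have h2 : ‖lat p‖^2 ≤ (N:ℝ)^2 := by
    have := norm_nonneg (lat p)
    have : ‖lat p‖ ≤ N := h1.trans hN
    gcongr
  rw [lat_normSq] at h2
  have h3 : p.1^2 - p.1 * p.2 + p.2^2 ≤ (N:ℤ)^2 := by exact_mod_cast h2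
  have hN0 : (0:ℤ) ≤ N := by positivity
  have a : |p.1| ≤ 2 * N := by
    apply abs_le_of_sq_le_sq _ (by positivity)
    nlinarith [sq_nonneg (2 * p.2 - p.1)]
  have b : |p.2| ≤ 2 * N := by
    apply abs_le_of_sq_le_sq _ (by positivity)
    nlinarith [sq_nonneg (2 * p.1 - p.2)]
  exact ⟨abs_le.1 a, abs_le.1 b⟩

lemma polar_integrable (g : ℝ × ℝ → ℂ) (hg : Continuous g) (R : ℝ) (h : ∀ p, R < p.1 → g p = 0) :
    IntegrableOn g (Set.Ioi 0 ×ˢ Set.Ioo (-Real.pi) Real.pi) := by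
  have h1 : IntegrableOn g (Set.Icc 0 R ×ˢ Set.Icc (-Real.pi) Real.pi) :=
    hg.continuousOn.integrableOn_compact (isCompact_Icc.prod isCompact_Icc)
  apply h1.of_forall_sdiff_eq_zero (measurableSet_Ioi.prod measurableSet_Ioo)
  rintro p ⟨⟨hp1, hp2⟩, hp3⟩
  apply h
  by_contra hc
  exact hp3 ⟨⟨le_of_lt hp1, not_lt.1 hc⟩, Set.Ioo_subset_Icc_self hp2⟩

lemma inv_locInt : LocallyIntegrable (fun z : ℂ => z⁻¹) volume := by
  intro x
  refine ⟨Metric.ball x 1, Metric.ball_mem_nhds x one_pos, ?_⟩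
  have hsub : Metric.ball x 1 ⊆ Metric.ball (0:ℂ) (‖x‖ + 1) := by
    apply Metric.ball_subset_ball'; simp [add_comm]
  refine IntegrableOn.mono_set ?_ hsub
  refine ⟨measurable_inv.aestronglyMeasurable, ?_⟩
  rw [hasFiniteIntegral_iff_enorm, ← lintegral_indicator Metric.isOpen_ball.measurableSet,
    ← Complex.lintegral_comp_polarCoord_symm]
  have hle : ∫⁻ p in polarCoord.target, ENNReal.ofReal p.1 • 
      (Metric.ball (0:ℂ) (‖x‖+1)).indicator (fun z : ℂ => ‖z⁻¹‖ₑ) (Complex.polarCoord.symm p) ≤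
      ∫⁻ p in polarCoord.target, 
        (Set.Ioo 0 (‖x‖+1) ×ˢ Set.Ioo (-Real.pi) Real.pi).indicator (fun _ => 1) p := by
    apply setLIntegral_mono' polarCoord.open_target.measurableSet
    rintro ⟨r, t⟩ hp
    rw [polarCoord_target] at hp
    have hr : 0 < r := hp.1
    by_cases hb : Complex.polarCoord.symm (r, t) ∈ Metric.ball (0:ℂ) (‖x‖+1)
    · have hb' := hb
      rw [mem_ball_zero_iff, Complex.norm_polarCoord_symm, abs_of_pos hr] at hb'
      rw [Set.indicator_of_mem hb, Set.indicator_of_mem (show (r,t) ∈ Set.Ioo 0 (‖x‖+1) ×ˢ Set.Ioo (-Real.pi) Real.pi from ⟨⟨hr, hb'⟩, hp.2⟩)]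
      rw [← ofReal_norm, norm_inv, Complex.norm_polarCoord_symm, abs_of_pos hr, smul_eq_mul,
        ← ENNReal.ofReal_mul hr.le]
      simp [hr.ne']
    · rw [Set.indicator_of_notMem hb]; simp
  refine hle.trans_lt ?_
  refine (setLIntegral_le_lintegral _ _).trans_lt ?_
  rw [lintegral_indicator (measurableSet_Ioo.prod measurableSet_Ioo)]
  simp only [lintegral_const, one_mul, Measure.restrict_apply MeasurableSet.univ, Set.univ_inter]
  exact ((Metric.isBounded_Ioo _ _).prod (Metric.isBounded_Ioo _ _)).measure_lt_top

lemma cauchy_pompeiu (ψ : ℂ → ℂ) (hψ : ContDiff ℝ 1 ψ) (hc : HasCompactSupport ψ) :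
    ∫ z : ℂ, z⁻¹ * dbar ψ z = - Real.pi * ψ 0 := by
  obtain ⟨R, hR0, hR⟩ : ∃ R > 0, ∀ z : ℂ, R ≤ ‖z‖ → z ∉ tsupport ψ := by
    obtain ⟨R, hR0, hR⟩ := hc.isCompact.isBounded.subset_ball_lt 0 0
    refine ⟨R, hR0, fun z hz h => ?_⟩
    have := hR h
    rw [mem_ball_zero_iff] at this
    linarith
  have hD0 : ∀ z : ℂ, R ≤ ‖z‖ → fderiv ℝ ψ z = 0 := fun z hz =>
    Function.notMem_support.1 fun h => hR z hz (support_fderiv_subset ℝ h)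
  have hψ0 : ∀ z : ℂ, R ≤ ‖z‖ → ψ z = 0 := fun z hz => image_eq_zero_of_notMem_tsupport (hR z hz)
  have hcD : Continuous (fderiv ℝ ψ) := hψ.continuous_fderiv (by norm_num)
  let e : ℝ → ℂ := fun t => Complex.exp (t * Complex.I)
  have he : Continuous e := by fun_prop
  have hen : ∀ t, ‖e t‖ = 1 := fun t => Complex.norm_exp_ofReal_mul_I t
  let A : ℝ × ℝ → ℂ := fun p => fderiv ℝ ψ (p.1 * e p.2) (e p.2)
  let B : ℝ × ℝ → ℂ := fun p => fderiv ℝ ψ (p.1 * e p.2) (Complex.I * e p.2)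
  have hA : Continuous A := by
    apply Continuous.clm_apply (hcD.comp (by fun_prop)) (by fun_prop)
  have hB : Continuous B := by
    apply Continuous.clm_apply (hcD.comp (by fun_prop)) (by fun_prop)
  have hbig : ∀ r t : ℝ, R < r → R ≤ ‖(r:ℂ) * e t‖ := by
    intro r t h; rw [norm_mul, hen, mul_one, Complex.norm_real]; exact h.le.trans (le_abs_self r)
  have hAi := polar_integrable A hA R (fun p hp => by simp [A, hD0 _ (hbig _ _ hp)])
  have hBi := polar_integrable B hB R (fun p hp => by simp [B, hD0 _ (hbig _ _ hp)])
  have hmain : ∫ z : ℂ, z⁻¹ * dbar ψ z = 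
      ∫ p in Set.Ioi (0:ℝ) ×ˢ Set.Ioo (-Real.pi) Real.pi, ((1/2) * A p + Complex.I/2 * B p) := by
    rw [← Complex.integral_comp_polarCoord_symm, polarCoord_target]
    apply setIntegral_congr_fun (measurableSet_Ioi.prod measurableSet_Ioo)
    rintro ⟨r, t⟩ ⟨hr, ht⟩
    have hr : 0 < r := hr
    have hsymm : Complex.polarCoord.symm (r, t) = r * e t := by
      rw [Complex.polarCoord_symm_apply]
      simp only [e, Complex.exp_mul_I, Complex.ofReal_cos, Complex.ofReal_sin]
    simp only [hsymm, A, B, dbar]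
    set L := fderiv ℝ ψ (r * e t)
    have hL : ∀ v : ℂ, L v = v.re * L 1 + v.im * L Complex.I := by
      intro v
      conv_lhs => rw [show v = v.re • (1:ℂ) + v.im • Complex.I by simp [Complex.re_add_im]]
      rw [map_add, map_smul, map_smul]; simp
    rw [hL (e t), hL (Complex.I * e t)]
    have hr' : (r:ℂ) ≠ 0 := by exact_mod_cast hr.ne'
    have h1 : (r:ℂ) * (r * e t)⁻¹ = (e t).re - (e t).im * Complex.I := by
      rw [mul_inv, ← mul_assoc, mul_inv_cancel₀ hr', one_mul, Complex.inv_def, Complex.normSq_eq_norm_sq, hen]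
      apply Complex.ext <;> simp
    rw [Complex.real_smul, ← mul_assoc, h1]
    simp only [Complex.mul_re, Complex.mul_im, Complex.I_re, Complex.I_im]
    push_cast
    linear_combination (-(e t).im * L Complex.I/2) * Complex.I_sq
  have hAint : ∫ p in Set.Ioi (0:ℝ) ×ˢ Set.Ioo (-Real.pi) Real.pi, A p = - (2 * Real.pi) * ψ 0 := by
    rw [Measure.volume_eq_prod] at hAi ⊢
    rw [setIntegral_prod _ hAi, ]
    rw [IntegrableOn, ← Measure.prod_restrict] at hAi
    rw [integral_integral_swap hAi]
    have : ∀ t : ℝ, ∫ r in Set.Ioi (0:ℝ), A (r, t) = - ψ 0 := by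
      intro t
      have hd : ∀ r : ℝ, HasDerivAt (fun r : ℝ => ψ (r * e t)) (A (r,t)) r := by
        intro r
        have h1 : HasDerivAt (fun r : ℝ => (r:ℂ) * e t) (e t) r := by
          simpa using (Complex.ofRealCLM.hasDerivAt (x := r)).mul_const (e t)
        exact ((hψ.differentiable (by norm_num)) _).hasFDerivAt.comp_hasDerivAt r h1
      have hi : IntegrableOn (fun r => A (r,t)) (Set.Ioi 0) := by
        have h1 : IntegrableOn (fun r => A (r,t)) (Set.Icc 0 R) :=
          (hA.comp (by fun_prop : Continuous fun r : ℝ => (r,t))).continuousOn.integrableOn_compact isCompact_Icc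
        apply h1.of_forall_sdiff_eq_zero measurableSet_Ioi
        rintro r ⟨hr1, hr2⟩
        have : R < r := by
          by_contra hc
          exact hr2 ⟨le_of_lt hr1, not_lt.1 hc⟩
        simp [A, hD0 _ (hbig r t this)]
      have ht : Filter.Tendsto (fun r : ℝ => ψ (r * e t)) Filter.atTop (nhds 0) := by
        apply tendsto_const_nhds.congr'
        filter_upwards [Filter.eventually_gt_atTop R] with r hr
        exact (hψ0 _ (hbig r t hr)).symm
      rw [integral_Ioi_of_hasDerivAt_of_tendsto' (fun r _ => hd r) hi ht]
      simp
    simp_rw [this]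
    rw [setIntegral_const]
    simp [Real.pi_pos.le, measureReal_def, Real.volume_Ioo]
    left; ring
  have hBint : ∫ p in Set.Ioi (0:ℝ) ×ˢ Set.Ioo (-Real.pi) Real.pi, B p = 0 := by
    rw [Measure.volume_eq_prod] at hBi ⊢
    rw [setIntegral_prod _ hBi]
    apply setIntegral_eq_zero_of_forall_eq_zero
    intro r hr
    have hr : 0 < r := hr
    rw [← integral_Ioc_eq_integral_Ioo, ← intervalIntegral.integral_of_le (by linarith [Real.pi_pos])]
    have hd : ∀ t : ℝ, HasDerivAt (fun t : ℝ => (r:ℂ)⁻¹ * ψ (r * e t)) (B (r,t)) t := by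
      intro t
      have h1 : HasDerivAt (fun t : ℝ => (r:ℂ) * e t) (r • (Complex.I * e t)) t := by
        have := (((Complex.ofRealCLM.hasDerivAt (x := t)).mul_const Complex.I).cexp).const_mul (r:ℂ)
        simpa [e, mul_comm] using this
      have h2 := (((hψ.differentiable (by norm_num)) (r * e t)).hasFDerivAt.comp_hasDerivAt t h1).const_mul (r:ℂ)⁻¹
      rw [map_smul, Complex.real_smul, ← mul_assoc, inv_mul_cancel₀ (by exact_mod_cast hr.ne'), one_mul] at h2
      exact h2
    rw [intervalIntegral.integral_eq_sub_of_hasDerivAt (fun t _ => hd t)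
      ((hB.comp (by fun_prop : Continuous fun t : ℝ => (r,t))).intervalIntegrable _ _)]
    have : e Real.pi = e (-Real.pi) := by
      simp only [e]; push_cast; rw [neg_mul, Complex.exp_pi_mul_I, Complex.exp_neg_pi_mul_I]
    rw [this, sub_self]
  rw [hmain, integral_add (hAi.const_mul _) (hBi.const_mul _), integral_const_mul, integral_const_mul,
    hAint, hBint]
  ring

/-- exponential factor -/
def Ef (k z : ℂ) : ℂ := Complex.exp ((Complex.I / 2) * (z - (starRingEnd ℂ) z) * k)

/-- regularised quotient -/
def Hf (k z : ℂ) : ℂ := θ (z - zmap k) / dslope θ 0 z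

lemma dsl_diff : Differentiable ℂ (dslope θ 0) := by
  rw [← differentiableOn_univ, Complex.differentiableOn_dslope Filter.univ_mem, differentiableOn_univ]
  exact θ_diff

lemma dsl_mul (z : ℂ) : z * dslope θ 0 z = θ z := by
  have := sub_smul_dslope θ 0 z
  simpa [θ_zero] using this

lemma dsl_ne (z : ℂ) (h : ∀ p, lat p = z → p = 0) : dslope θ 0 z ≠ 0 := by
  intro h0
  have h1 := dsl_mul z
  rw [h0, mul_zero] at h1
  obtain ⟨p, hp⟩ := θ_zeros z h1.symm
  have h2 := h p hp.symm
  have : z = 0 := by rw [hp, h2]; simp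
  rw [this, dslope_same] at h0
  exact θ_deriv_ne h0

lemma F_eq (k z : ℂ) : F k z = z⁻¹ * (Hf k z * Ef k z) := by
  rw [F, ← dsl_mul z, Hf, Ef, div_eq_mul_inv, mul_inv, div_eq_mul_inv]
  ring

lemma V_open : IsOpen {z | dslope θ 0 z ≠ 0} := isOpen_ne_fun dsl_diff.continuous continuous_const

lemma Hf_diffOn (k : ℂ) : DifferentiableOn ℂ (Hf k) {z | dslope θ 0 z ≠ 0} := by
  intro z hz
  have h1 : DifferentiableAt ℂ (fun z => θ (z - zmap k)) z :=
    DifferentiableAt.comp (f := fun z => z - zmap k) z (θ_diff _) (by fun_prop)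
  exact (h1.div (dsl_diff z) hz).differentiableWithinAt

lemma Ef_hasFDerivAt (k z : ℂ) : HasFDerivAt (Ef k) (Ef k z • 
    ((Complex.I / 2 * k) • (ContinuousLinearMap.id ℝ ℂ - (Complex.conjCLE : ℂ →L[ℝ] ℂ)))) z := by
  set l : ℂ →L[ℝ] ℂ := ((Complex.I / 2 * k) • (ContinuousLinearMap.id ℝ ℂ - (Complex.conjCLE : ℂ →L[ℝ] ℂ))) with hl
  have : Ef k = fun z => Complex.exp (l z) := by
    funext z
    simp [Ef, hl]
    ring_nf
  rw [this]
  exact l.hasFDerivAt.cexp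

lemma Ef_contDiff (k : ℂ) : ContDiff ℝ 1 (Ef k) := by
  unfold Ef
  have : ContDiff ℝ 1 (fun z : ℂ => (starRingEnd ℂ) z) := Complex.conjCLE.contDiff
  fun_prop

lemma dbar_Ef (k z : ℂ) : dbar (Ef k) z = - (Complex.I / 2) * k * Ef k z := by
  rw [dbar, (Ef_hasFDerivAt k z).fderiv]
  simp
  linear_combination (Ef k z * Complex.I * k / 2) * Complex.I_sq

lemma dbar_mul (f g : ℂ → ℂ) (z : ℂ) (hf : DifferentiableAt ℝ f z) (hg : DifferentiableAt ℝ g z) :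
    dbar (fun z => f z * g z) z = f z * dbar g z + dbar f z * g z := by
  simp only [dbar]
  rw [fderiv_fun_mul hf hg]
  simp
  ring

lemma dbar_holo (f : ℂ → ℂ) (z : ℂ) (hf : DifferentiableAt ℂ f z) : dbar f z = 0 := by
  rw [dbar, (hf.hasFDerivAt.restrictScalars ℝ).fderiv]
  simp only [ContinuousLinearMap.coe_restrictScalars']
  have : (fderiv ℂ f z) Complex.I = Complex.I * fderiv ℂ f z 1 := by
    conv_lhs => rw [show Complex.I = Complex.I • (1:ℂ) by simp]
    rw [map_smul]; simp
  rw [this, ← mul_assoc, Complex.I_mul_I]; ring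

lemma dbar_off (f : ℂ → ℂ) (z : ℂ) (h : z ∉ tsupport f) : dbar f z = 0 := by
  have : fderiv ℝ f z = 0 := Function.notMem_support.1 fun h' => h (support_fderiv_subset ℝ h')
  rw [dbar, this]; simp

/-- the operator -/
def Dop (k : ℂ) (χ : ℂ → ℂ) (z : ℂ) : ℂ := 2 * Complex.I * dbar χ z + k * χ z

lemma single0 (k : ℂ) (χ : ℂ → ℂ) (hχ : ContDiff ℝ 1 χ) (hc : HasCompactSupport χ)
    (hV : tsupport χ ⊆ {z | dslope θ 0 z ≠ 0}) :
    ∫ z : ℂ, F k z * Dop k χ z = c k * χ 0 := by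
  let ψ : ℂ → ℂ := fun z => Hf k z * (Ef k z * χ z)
  have hsub : tsupport ψ ⊆ tsupport χ := by
    refine closure_mono fun z hz => ?_
    simp only [ψ, Function.mem_support] at hz ⊢
    exact fun h => hz (by rw [h]; simp)
  have hψc : HasCompactSupport ψ := hc.of_isClosed_subset (isClosed_tsupport _) hsub
  have hψ : ContDiff ℝ 1 ψ := by
    rw [contDiff_iff_contDiffAt]
    intro z
    by_cases hz : z ∈ tsupport χ
    · have h1 : ContDiffAt ℂ 1 (Hf k) z :=
        ((Hf_diffOn k).analyticAt (V_open.mem_nhds (hV hz))).contDiffAt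
      exact (h1.restrict_scalars ℝ).mul ((Ef_contDiff k).contDiffAt.mul hχ.contDiffAt)
    · have hz' : z ∉ tsupport ψ := fun h => hz (hsub h)
      exact contDiffAt_const.congr_of_eventuallyEq (notMem_tsupport_iff_eventuallyEq.1 hz')
  have hcp := cauchy_pompeiu ψ hψ hψc
  have heq : ∀ z, F k z * Dop k χ z = 2 * Complex.I * (z⁻¹ * dbar ψ z) := by
    intro z
    by_cases hz : z ∈ tsupport χ
    · have hH := (Hf_diffOn k).differentiableAt (V_open.mem_nhds (hV hz))
      have hE := (Ef_contDiff k).differentiable (by norm_num) z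
      have hX := hχ.differentiable (by norm_num) z
      have : dbar ψ z = Hf k z * (Ef k z * dbar χ z + - (Complex.I / 2) * k * Ef k z * χ z) := by
        simp only [ψ]
        rw [dbar_mul (Hf k) (fun z => Ef k z * χ z) z (hH.restrictScalars ℝ) (hE.mul hX),
          dbar_mul _ _ z hE hX, dbar_holo _ _ hH, dbar_Ef]
        ring
      rw [this, F_eq, Dop]
      linear_combination (z⁻¹ * Hf k z * Ef k z * k * χ z) * Complex.I_sq
    · rw [Dop, dbar_off χ z hz, dbar_off ψ z (fun h => hz (hsub h)), image_eq_zero_of_notMem_tsupport hz]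
      simp
  simp_rw [heq]
  rw [integral_const_mul, hcp]
  simp only [ψ, Hf, Ef, c, dslope_same, zero_sub, θ_neg]
  simp
  ring

lemma F_locInt (k : ℂ) : LocallyIntegrable (F k) volume := by
  have h1 : LocallyIntegrableOn (F k) {z | dslope θ 0 z ≠ 0} volume := by
    have := (inv_locInt.locallyIntegrableOn {z | dslope θ 0 z ≠ 0}).mul_continuousOn
      (g := fun z => Hf k z * Ef k z)
      ((Hf_diffOn k).continuousOn.mul (Ef_contDiff k).continuous.continuousOn) V_open.isLocallyClosed
    exact this.congr (Filter.Eventually.of_forall fun z => (F_eq k z).symm)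
  have h2 : ∀ z, dslope θ 0 z ≠ 0 → IntegrableAtFilter (F k) (nhds z) volume := by
    intro z hz
    have := h1 z hz
    rwa [V_open.nhdsWithin_eq hz] at this
  intro x
  by_cases hx : ∃ p, x = lat p
  · obtain ⟨p, rfl⟩ := hx
    obtain ⟨s, hs, hi⟩ := h2 0 (by rw [dslope_same]; exact θ_deriv_ne)
    refine ⟨(fun z => z - lat p) ⁻¹' s, ?_, ?_⟩
    · apply (continuous_id.sub continuous_const).continuousAt.preimage_mem_nhds
      simpa using hs
    · have hmp : MeasurePreserving (fun z : ℂ => z - lat p) volume volume :=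
        measurePreserving_sub_right volume (lat p)
      have := (hmp.integrableOn_comp_preimage (MeasurableEquiv.subRight (lat p)).measurableEmbedding).2 hi
      refine this.congr_fun_ae (Filter.Eventually.of_forall fun z => ?_)
      have := F_add_lat k (z - lat p) p
      rw [sub_add_cancel] at this
      exact this.symm
  · apply h2
    apply dsl_ne
    intro p hp
    exact absurd ⟨p, hp.symm⟩ hx

lemma Dop_shift (k : ℂ) (χ : ℂ → ℂ) (a z : ℂ) : Dop k (fun z => χ (z + a)) z = Dop k χ (z + a) := by
  simp only [Dop, dbar, fderiv_comp_add_right]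

lemma single (k : ℂ) (p : ℤ × ℤ) (χ : ℂ → ℂ) (hχ : ContDiff ℝ 1 χ) (hc : HasCompactSupport χ)
    (hV : ∀ q, lat q ∈ tsupport χ → q = p) :
    ∫ z : ℂ, F k z * Dop k χ z = c k * χ (lat p) := by
  have hts : tsupport (fun z => χ (z + lat p)) = (fun z => z + lat p) ⁻¹' tsupport χ :=
    tsupport_comp_eq_preimage χ (Homeomorph.addRight (lat p))
  have h := single0 k (fun z => χ (z + lat p)) (hχ.comp (by fun_prop))
    (hc.comp_homeomorph (Homeomorph.addRight (lat p))) (by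
      rw [hts]
      intro z hz
      apply dsl_ne
      rintro q rfl
      have h1 : lat q + lat p = lat (q + p) := by simp [lat]; ring
      have h2 := hV (q + p) (by rw [← h1]; exact hz)
      simpa using h2)
  rw [zero_add] at h
  rw [← h, ← integral_add_right_eq_self _ (lat p)]
  congr 1; funext z
  rw [Dop_shift, F_add_lat]

lemma Dop_cont (k : ℂ) (χ : ℂ → ℂ) (hχ : ContDiff ℝ 1 χ) : Continuous (Dop k χ) := by
  have := hχ.continuous_fderiv (by norm_num)
  have h2 := hχ.continuous
  unfold Dop dbar
  have a : Continuous fun z => fderiv ℝ χ z 1 := this.clm_apply continuous_const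
  have b : Continuous fun z => fderiv ℝ χ z Complex.I := this.clm_apply continuous_const
  fun_prop

lemma Dop_int (k : ℂ) (χ : ℂ → ℂ) (hχ : ContDiff ℝ 1 χ) (hc : HasCompactSupport χ) :
    Integrable (fun z => F k z * Dop k χ z) volume := by
  apply (F_locInt k).integrable_smul_right_of_hasCompactSupport (Dop_cont k χ hχ)
  apply hc.mono'
  intro z hz
  by_contra h
  apply hz
  rw [Dop, dbar_off χ z h, image_eq_zero_of_notMem_tsupport h]; simp

lemma Dop_add (k : ℂ) (f g : ℂ → ℂ) (hf : ContDiff ℝ 1 f) (hg : ContDiff ℝ 1 g) (z : ℂ) :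
    Dop k (fun z => f z + g z) z = Dop k f z + Dop k g z := by
  simp only [Dop, dbar]
  rw [fderiv_fun_add (hf.differentiable (by norm_num) z) (hg.differentiable (by norm_num) z)]
  simp
  ring

lemma multi (k : ℂ) (S : Finset (ℤ × ℤ)) : ∀ (χ : ℂ → ℂ), ContDiff ℝ 1 χ → HasCompactSupport χ →
    (∀ q, lat q ∈ tsupport χ → q ∈ S) →
    ∫ z : ℂ, F k z * Dop k χ z = c k * ∑ p ∈ S, χ (lat p) := by
  induction S using Finset.induction_on with
  | empty =>
    intro χ hχ hc hS
    rw [single k 0 χ hχ hc (fun q hq => absurd (hS q hq) (Finset.notMem_empty _)),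
      image_eq_zero_of_notMem_tsupport (fun h => absurd (hS _ h) (Finset.notMem_empty _))]
    simp
  | insert p S hp ih =>
    intro χ hχ hc hS
    let ρ : ContDiffBump (lat p) := ⟨1/4, 1/2, by norm_num, by norm_num⟩
    have hρ : ContDiff ℝ 1 (fun z => ((ρ z : ℝ) : ℂ)) := Complex.ofRealCLM.contDiff.comp ρ.contDiff
    let f : ℂ → ℂ := fun z => ρ z * χ z
    let g : ℂ → ℂ := fun z => (1 - ρ z) * χ z
    have hf : ContDiff ℝ 1 f := hρ.mul hχ
    have hg : ContDiff ℝ 1 g := (contDiff_const.sub hρ).mul hχ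
    have hfc : HasCompactSupport f := hc.mul_left
    have hgc : HasCompactSupport g := hc.mul_left
    have hfg : χ = fun z => f z + g z := by funext z; simp only [f, g]; ring
    have hdist : ∀ q, q ≠ p → 1 ≤ dist (lat q) (lat p) := by
      intro q hq
      rw [dist_eq_norm, lat_sub]; exact lat_norm_ge _ (sub_ne_zero.2 hq)
    have hfs := single k p f hf hfc (by
      intro q hq
      by_contra hne
      have h1 : tsupport f ⊆ Metric.closedBall (lat p) (1/2) := by
        rw [← show tsupport ρ = Metric.closedBall (lat p) (1/2) from ρ.tsupport_eq]
        refine closure_mono fun z hz => ?_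
        simp only [f, Function.mem_support] at hz ⊢
        exact fun h => hz (by rw [h]; simp)
      have h2 := h1 hq
      rw [Metric.mem_closedBall] at h2
      linarith [hdist q hne])
    have hgs := ih g hg hgc (by
      intro q hq
      have h1 : tsupport g ⊆ tsupport χ := by
        refine closure_mono fun z hz => ?_
        simp only [g, Function.mem_support] at hz ⊢
        exact fun h => hz (by rw [h]; simp)
      refine (Finset.mem_insert.1 (hS q (h1 hq))).resolve_left ?_
      rintro rfl
      refine notMem_tsupport_iff_eventuallyEq.2 ?_ hq
      filter_upwards [ρ.eventuallyEq_one] with z hz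
      simp [g, hz])
    have hint : ∫ z : ℂ, F k z * Dop k χ z = (∫ z : ℂ, F k z * Dop k f z) + ∫ z : ℂ, F k z * Dop k g z := by
      rw [← integral_add (Dop_int k f hf hfc) (Dop_int k g hg hgc)]
      congr 1; funext z
      rw [← mul_add, ← Dop_add k f g hf hg, ← hfg]
    rw [hint, hfs, hgs, Finset.sum_insert hp, mul_add]
    congr 2
    · have : ρ (lat p) = 1 := ρ.eventuallyEq_one.self_of_nhds
      simp [f, this]
    · apply Finset.sum_congr rfl
      intro q hq
      have : ρ (lat q) = 0 := by
        apply ρ.zero_of_le_dist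
        have := hdist q (fun h => hp (h ▸ hq))
        show (1/2:ℝ) ≤ _
        linarith
      simp [g, this]

theorem stmt4 (k : ℂ) :
    LocallyIntegrable (F k) volume ∧
    ∀ χ : ℂ → ℂ, ContDiff ℝ (⊤ : ℕ∞) χ → HasCompactSupport χ →
      ({p : ℤ × ℤ | χ ((p.1 : ℂ) * ω + (p.2 : ℂ)) ≠ 0}.Finite ∧
       ∫ z : ℂ, F k z * (2 * Complex.I * dbar χ z + k * χ z)
         = c k * ∑' p : ℤ × ℤ, χ ((p.1 : ℂ) * ω + (p.2 : ℂ))) := by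
  refine ⟨F_locInt k, fun χ hχ hc => ?_⟩
  have hfin := lat_finite (tsupport χ) hc
  refine ⟨hfin.subset fun p hp => subset_tsupport χ hp, ?_⟩
  have h := multi k hfin.toFinset χ (hχ.of_le (by exact_mod_cast le_top)) hc
    (fun q hq => hfin.mem_toFinset.2 hq)
  have ht : ∑' p : ℤ × ℤ, χ ((p.1 : ℂ) * ω + (p.2 : ℂ)) = ∑ p ∈ hfin.toFinset, χ (lat p) := by
    apply tsum_eq_sum
    intro p hp
    exact image_eq_zero_of_notMem_tsupport (fun h => hp (hfin.mem_toFinset.2 h))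
  rw [ht]
  exact h

end
end

section
/- Let U₊, U₋ : ℂ → ℂ be real-analytic, let α, k ∈ ℂ, and let w = (w₁,w₂) : ℂ → ℂ² be real-analytic satisfying 2D_{z̄}w₁ + αU₊w₂ + kw₁ = 0 and αU₋w₁ + 2D_{z̄}w₂ + kw₂ = 0 on all of ℂ. If w(z₀) = 0 for some z₀ ∈ ℂ, then (2D_{z̄})^ℓ w(z₀) = 0 for every ℓ ≥ 0, and there exists a real-analytic w₀ : ℂ → ℂ² with w(z) = (z−z₀)·w₀(z) for all z ∈ ℂ. -/
open Complex

noncomputable section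

/-- `2 D_{z̄} u = -i (∂_x u + i ∂_y u)`. -/
def Dbar2 (u : ℂ → ℂ) : ℂ → ℂ := fun z =>
  -Complex.I * (fderiv ℝ u z 1 + Complex.I * fderiv ℝ u z Complex.I)

/-- Real-analyticity of a map `ℂ ≅ ℝ² → ℂ`. -/
def RealAnalytic (f : ℂ → ℂ) : Prop := ∀ z : ℂ, AnalyticAt ℝ f z

lemma multi_poly (n : ℕ) : ∀ p : ContinuousMultilinearMap ℝ (fun _ : Fin n => ℂ) ℂ,
    ∃ d : ℕ → ℂ, (∀ j, ‖d j‖ ≤ 2 ^ n * ‖p‖) ∧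
      ∀ h : ℂ, p (fun _ => h) =
        ∑ j ∈ Finset.range (n + 1), d j * (h ^ j * (starRingEnd ℂ h) ^ (n - j)) := by
  induction n with
  | zero =>
    intro p
    refine ⟨fun _ => p 0, fun j => ?_, fun h => ?_⟩
    · have := p.le_opNorm 0
      simpa using this
    · simp only [zero_add, Finset.range_one, Finset.sum_singleton, pow_zero]
      rw [Subsingleton.elim (fun _ : Fin 0 => h) 0]
      simp
  | succ n ih =>
    intro p
    obtain ⟨d1, b1, e1⟩ := ih (p.curryLeft 1)
    obtain ⟨d2, b2, e2⟩ := ih (p.curryLeft I)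
    have n1 : ‖p.curryLeft 1‖ ≤ ‖p‖ := by
      have := p.curryLeft.le_opNorm 1
      simpa [ContinuousMultilinearMap.curryLeft_norm] using this
    have n2 : ‖p.curryLeft I‖ ≤ ‖p‖ := by
      have := p.curryLeft.le_opNorm I
      simpa [ContinuousMultilinearMap.curryLeft_norm] using this
    have B1 : ∀ j, ‖d1 j‖ ≤ 2 ^ n * ‖p‖ := fun j => (b1 j).trans (by gcongr)
    have B2 : ∀ j, ‖d2 j‖ ≤ 2 ^ n * ‖p‖ := fun j => (b2 j).trans (by gcongr)
    -- coefficient of h and conj h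
    let A : ℕ → ℂ := fun j => (d1 j - I * d2 j) / 2
    let B : ℕ → ℂ := fun j => (d1 j + I * d2 j) / 2
    have hA : ∀ j, ‖A j‖ ≤ 2 ^ n * ‖p‖ := fun j => by
      have : ‖d1 j - I * d2 j‖ ≤ ‖d1 j‖ + ‖d2 j‖ := by
        simpa using norm_sub_le (d1 j) (I * d2 j)
      simp only [A, norm_div, Complex.norm_ofNat]
      linarith [B1 j, B2 j]
    have hB : ∀ j, ‖B j‖ ≤ 2 ^ n * ‖p‖ := fun j => by
      have : ‖d1 j + I * d2 j‖ ≤ ‖d1 j‖ + ‖d2 j‖ := by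
        simpa using norm_add_le (d1 j) (I * d2 j)
      simp only [B, norm_div, Complex.norm_ofNat]
      linarith [B1 j, B2 j]
    have hnn : 0 ≤ 2 ^ n * ‖p‖ := by positivity
    refine ⟨fun j => (if j = 0 then 0 else A (j - 1)) + (if j = n + 1 then 0 else B j),
      fun j => ?_, fun h => ?_⟩
    · refine (norm_add_le _ _).trans ?_
      have h1 : ‖(if j = 0 then 0 else A (j - 1))‖ ≤ 2 ^ n * ‖p‖ := by
        split_ifs
        · simpa using hnn
        · exact hA _
      have h2 : ‖(if j = n + 1 then 0 else B j)‖ ≤ 2 ^ n * ‖p‖ := by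
        split_ifs
        · simpa using hnn
        · exact hB _
      rw [pow_succ]; linarith
    · have key : p (fun _ => h) = (h.re : ℂ) * p.curryLeft 1 (fun _ => h)
          + (h.im : ℂ) * p.curryLeft I (fun _ => h) := by
        have : p (fun _ => h) = p.curryLeft h (fun _ => h) := by
          rw [ContinuousMultilinearMap.curryLeft_apply]
          congr 1
          funext i
          refine Fin.cases ?_ (fun i => ?_) i <;> simp
        rw [this]
        have hh : h = h.re • (1 : ℂ) + h.im • I := by
          simp [Complex.re_add_im]
        have h3 : p.curryLeft h = h.re • p.curryLeft 1 + h.im • p.curryLeft I := by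
          conv_lhs => rw [hh]
          rw [map_add, map_smul, map_smul]
        rw [h3]
        simp
      have hre : (h.re : ℂ) = (h + starRingEnd ℂ h) / 2 := by
        rw [Complex.re_eq_add_conj]
      have him : (h.im : ℂ) = -I * (h - starRingEnd ℂ h) / 2 := by
        rw [Complex.im_eq_sub_conj]
        field_simp
        simp
      have e3 : p (fun _ => h) = h * ∑ j ∈ Finset.range (n + 1), A j * (h ^ j * (starRingEnd ℂ h) ^ (n - j))
          + starRingEnd ℂ h * ∑ j ∈ Finset.range (n + 1), B j * (h ^ j * (starRingEnd ℂ h) ^ (n - j)) := by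
        have ea : ∑ j ∈ Finset.range (n + 1), A j * (h ^ j * (starRingEnd ℂ h) ^ (n - j))
          = (p.curryLeft 1 (fun _ => h) - I * p.curryLeft I (fun _ => h)) / 2 := by
          rw [e1, e2, Finset.mul_sum, ← Finset.sum_sub_distrib, Finset.sum_div]
          refine Finset.sum_congr rfl fun j _ => ?_
          simp only [A]; ring
        have eb : ∑ j ∈ Finset.range (n + 1), B j * (h ^ j * (starRingEnd ℂ h) ^ (n - j))
          = (p.curryLeft 1 (fun _ => h) + I * p.curryLeft I (fun _ => h)) / 2 := by
          rw [e1, e2, Finset.mul_sum, ← Finset.sum_add_distrib, Finset.sum_div]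
          refine Finset.sum_congr rfl fun j _ => ?_
          simp only [B]; ring
        rw [key, ea, eb, hre, him]; ring
      rw [e3]
      simp only [add_mul, Finset.sum_add_distrib]
      congr 1
      · rw [Finset.sum_range_succ' _ (n + 1)]
        simp only [Finset.mul_sum]
        simp only [if_true, zero_mul, add_zero]
        refine Finset.sum_congr rfl fun j _ => ?_
        simp [pow_succ]
        ring
      · rw [Finset.sum_range_succ _ (n + 1)]
        simp only [Finset.mul_sum]
        simp only [if_true, zero_mul, add_zero]
        refine Finset.sum_congr rfl fun j hj => ?_
        have hj' := Finset.mem_range.1 hj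
        rw [if_neg (by omega), show n + 1 - j = (n - j) + 1 by omega, pow_succ]
        ring

lemma monom (n j : ℕ) : ∃ M : ContinuousMultilinearMap ℝ (fun _ : Fin n => ℂ) ℂ,
    ‖M‖ ≤ 1 ∧ (j ≤ n → ∀ h : ℂ, M (fun _ => h) = h ^ j * (starRingEnd ℂ h) ^ (n - j)) := by
  refine ⟨(ContinuousMultilinearMap.mkPiAlgebra ℝ (Fin n) ℂ).compContinuousLinearMap
    (fun i => if (i : ℕ) < j then ContinuousLinearMap.id ℝ ℂ else (conjCLE : ℂ →L[ℝ] ℂ)), ?_, ?_⟩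
  · refine (ContinuousMultilinearMap.norm_compContinuousLinearMap_le _ _).trans ?_
    rw [ContinuousMultilinearMap.norm_mkPiAlgebra, one_mul]
    refine Finset.prod_le_one (fun _ _ => norm_nonneg _) fun i _ => ?_
    split_ifs
    · exact ContinuousLinearMap.norm_id_le
    · simp
  · intro hj h
    simp only [ContinuousMultilinearMap.compContinuousLinearMap_apply,
      ContinuousMultilinearMap.mkPiAlgebra_apply]
    rw [← Finset.prod_range (f := fun i => (if i < j then ContinuousLinearMap.id ℝ ℂ else (conjCLE : ℂ →L[ℝ] ℂ)) h)]
    obtain ⟨m, rfl⟩ := Nat.exists_eq_add_of_le hj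
    rw [Finset.prod_range_add]
    congr 1
    · rw [Finset.prod_congr rfl (g := fun _ => h)]
      · simp
      · intro i hi
        rw [if_pos (Finset.mem_range.1 hi)]; rfl
    · simp

lemma decomp {f : ℂ → ℂ} {z₀ : ℂ} (hf : AnalyticAt ℝ f z₀) :
    ∃ V G : ℂ → ℂ, AnalyticAt ℝ V z₀ ∧ AnalyticAt ℂ G 0 ∧
      ∀ᶠ z in nhds z₀, f z = (z - z₀) * V z + G (starRingEnd ℂ (z - z₀)) := by
  obtain ⟨p, hp⟩ := hf
  obtain ⟨C, a, hC, ha, hpb⟩ : ∃ C a : ℝ, 0 < C ∧ 0 < a ∧ ∀ n, ‖p n‖ ≤ C * a ^ n := by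
    obtain ⟨C, r, hC, hr, h⟩ := p.le_mul_pow_of_radius_pos hp.radius_pos
    exact ⟨C, r, hC, hr, h⟩
  choose d hdb hd using fun n => multi_poly n (p n)
  choose M hMb hM using monom
  have hdb' : ∀ n j, ‖d n j‖ ≤ C * (2 * a) ^ n := fun n j => by
    refine (hdb n j).trans ?_
    rw [mul_pow]
    nlinarith [hpb n, pow_pos (two_pos : (0:ℝ) < 2) n]
  let q : FormalMultilinearSeries ℝ ℂ ℂ := fun n =>
    ∑ j ∈ Finset.range (n + 1), d (n + 1) (j + 1) • M n j
  let g : FormalMultilinearSeries ℂ ℂ ℂ := FormalMultilinearSeries.ofScalars ℂ (fun n => d n 0)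
  have hq : ∀ n, ‖q n‖ ≤ C * (2 * a) * (4 * a) ^ n := fun n => by
    refine (norm_sum_le _ _).trans ?_
    have : ∀ j ∈ Finset.range (n + 1), ‖d (n + 1) (j + 1) • M n j‖ ≤ C * (2 * a) ^ (n + 1) := by
      intro j _
      rw [norm_smul]
      have h1 := hdb' (n + 1) (j + 1)
      have h2 := hMb n j
      calc _ ≤ (C * (2 * a) ^ (n + 1)) * 1 := by gcongr
        _ = _ := mul_one _
    refine (Finset.sum_le_card_nsmul _ _ _ this).trans ?_
    rw [Finset.card_range, nsmul_eq_mul]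
    have h3 : ((n + 1 : ℕ) : ℝ) ≤ 2 ^ n := by
      exact_mod_cast Nat.lt_two_pow_self
    calc _ ≤ (2 : ℝ) ^ n * (C * (2 * a) ^ (n + 1)) := by gcongr
      _ = _ := by
        rw [show (4 : ℝ) * a = 2 * (2 * a) by ring, mul_pow 2 (2 * a), pow_succ]; ring
  have hg : ∀ n, ‖g n‖ ≤ C * (2 * a) ^ n := fun n => by
    simp only [g]
    rw [FormalMultilinearSeries.ofScalars_norm]
    exact hdb' n 0
  have rad : ∀ b : ℝ, 0 < b → ∃ r : NNReal, 0 < r ∧ (r : ℝ) * b = 1 := fun b hb =>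
    ⟨Real.toNNReal b⁻¹, Real.toNNReal_pos.2 (inv_pos.2 hb), by
      rw [Real.coe_toNNReal _ (inv_pos.2 hb).le]
      field_simp⟩
  have hqr : 0 < q.radius := by
    obtain ⟨r, hr, hrb⟩ := rad (4 * a) (by positivity)
    refine lt_of_lt_of_le (ENNReal.coe_pos.2 hr) (q.le_radius_of_bound (C * (2 * a)) fun n => ?_)
    calc ‖q n‖ * (r : ℝ) ^ n ≤ C * (2 * a) * (4 * a) ^ n * (r : ℝ) ^ n := by gcongr; exact hq n
      _ = C * (2 * a) * ((r : ℝ) * (4 * a)) ^ n := by rw [mul_pow (r : ℝ)]; ring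
      _ ≤ _ := by rw [hrb]; simp
  have hgr : 0 < g.radius := by
    obtain ⟨r, hr, hrb⟩ := rad (2 * a) (by positivity)
    refine lt_of_lt_of_le (ENNReal.coe_pos.2 hr) (g.le_radius_of_bound C fun n => ?_)
    calc ‖g n‖ * (r : ℝ) ^ n ≤ C * (2 * a) ^ n * (r : ℝ) ^ n := by gcongr; exact hg n
      _ = C * ((r : ℝ) * (2 * a)) ^ n := by rw [mul_pow (r : ℝ)]; ring
      _ ≤ _ := by rw [hrb]; simp
  have hqs := (q.hasFPowerSeriesOnBall hqr).hasFPowerSeriesAt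
  have hgs := (g.hasFPowerSeriesOnBall hgr).hasFPowerSeriesAt
  refine ⟨fun z => q.sum (z - z₀), g.sum, ?_, hgs.analyticAt, ?_⟩
  · have h1 : AnalyticAt ℝ q.sum (z₀ - z₀) := by rw [sub_self]; exact hqs.analyticAt
    exact h1.comp_of_eq (f := fun z => z - z₀) (by fun_prop) rfl
  · have t1 : Filter.Tendsto (fun z : ℂ => z - z₀) (nhds z₀) (nhds 0) := by
      have : Continuous fun z : ℂ => z - z₀ := by fun_prop
      simpa using this.tendsto z₀
    have t2 : Filter.Tendsto (fun z : ℂ => starRingEnd ℂ (z - z₀)) (nhds z₀) (nhds 0) := by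
      have : Continuous fun z : ℂ => starRingEnd ℂ (z - z₀) :=
        continuous_conj.comp (by fun_prop)
      simpa using this.tendsto z₀
    filter_upwards [t1.eventually hp.eventually_hasSum, t1.eventually hqs.eventually_hasSum,
      t2.eventually hgs.eventually_hasSum] with z H1 H2 H3
    simp only [add_sub_cancel, zero_add] at H1 H2 H3
    set h := z - z₀
    have H4 := H2.mul_left h
    have H5 : HasSum (fun n => p n (fun _ => h) - g n (fun _ => starRingEnd ℂ h)) (h * q.sum h) := by
      rw [← hasSum_nat_add_iff' 1]
      have e0 : (p 0 fun _ => h) - (g 0 fun _ => starRingEnd ℂ h) = 0 := by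
        rw [hd]; simp [g, FormalMultilinearSeries.ofScalars]
      simp only [Finset.range_one, Finset.sum_singleton]
      rw [e0, sub_zero]
      suffices hs : ∀ n, (p (n + 1) fun _ => h) - (g (n + 1) fun _ => starRingEnd ℂ h)
          = h * q n (fun _ => h) by
        rw [funext hs]
        exact H4
      intro n
      rw [hd, Finset.sum_range_succ']
      have : g (n + 1) (fun _ => starRingEnd ℂ h) = d (n + 1) 0 * (starRingEnd ℂ h) ^ (n + 1) := by
        simp only [g, FormalMultilinearSeries.ofScalars_apply_eq, smul_eq_mul]
      rw [this]
      simp only [q, ContinuousMultilinearMap.sum_apply, ContinuousMultilinearMap.smul_apply, Finset.mul_sum]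
      simp only [pow_zero, one_mul, Nat.sub_zero, add_sub_cancel_right]
      refine Finset.sum_congr rfl fun j hj => ?_
      rw [hM n j (by have := Finset.mem_range.1 hj; omega)]
      rw [show n + 1 - (j + 1) = n - j by omega, smul_eq_mul, pow_succ]
      ring
    have H6 := H5.add H3
    simp only [sub_add_cancel] at H6
    exact H1.unique H6

lemma dbar_add {u v : ℂ → ℂ} {z : ℂ} (hu : DifferentiableAt ℝ u z) (hv : DifferentiableAt ℝ v z) :
    Dbar2 (fun z => u z + v z) z = Dbar2 u z + Dbar2 v z := by
  simp only [Dbar2]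
  rw [fderiv_fun_add hu hv]
  simp only [ContinuousLinearMap.add_apply]
  ring

lemma dbar_mul_s7 {u v : ℂ → ℂ} {z : ℂ} (hu : DifferentiableAt ℝ u z) (hv : DifferentiableAt ℝ v z) :
    Dbar2 (fun z => u z * v z) z = Dbar2 u z * v z + u z * Dbar2 v z := by
  simp only [Dbar2]
  rw [fderiv_fun_mul hu hv]
  simp only [ContinuousLinearMap.add_apply, ContinuousLinearMap.smul_apply, smul_eq_mul]
  ring

lemma dbar_analyticAt {u : ℂ → ℂ} {z : ℂ} (hu : AnalyticAt ℝ u z) : AnalyticAt ℝ (Dbar2 u) z := by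
  have h : ∀ v : ℂ, AnalyticAt ℝ (fun z => fderiv ℝ u z v) z := fun v =>
    ((ContinuousLinearMap.apply ℝ ℂ v).analyticAt _).comp hu.fderiv
  exact analyticAt_const.mul ((h 1).add (analyticAt_const.mul (h I)))

lemma dbar_congr {u v : ℂ → ℂ} {z : ℂ} (h : u =ᶠ[nhds z] v) : Dbar2 u =ᶠ[nhds z] Dbar2 v := by
  filter_upwards [h.fderiv (𝕜 := ℝ)] with y hy
  simp only [Dbar2, hy]

lemma dbar_lin (z₀ z : ℂ) : Dbar2 (fun z => z - z₀) z = 0 := by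
  simp only [Dbar2]
  rw [fderiv_sub_const, fderiv_id']
  simp

lemma dbar_conj {G : ℂ → ℂ} {z₀ z : ℂ} (hG : DifferentiableAt ℂ G (starRingEnd ℂ (z - z₀))) :
    Dbar2 (fun z => G (starRingEnd ℂ (z - z₀))) z
      = -2 * I * deriv G (starRingEnd ℂ (z - z₀)) := by
  have h1 : HasFDerivAt (fun z : ℂ => starRingEnd ℂ (z - z₀)) (conjCLE : ℂ →L[ℝ] ℂ) z := by
    have := (conjCLE : ℂ →L[ℝ] ℂ).hasFDerivAt (x := z - z₀)
    exact this.comp z ((hasFDerivAt_id z).sub_const z₀)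
  have h2 := (hG.hasDerivAt.hasFDerivAt.restrictScalars ℝ).comp z h1
  simp only [Dbar2]
  have h3 : fderiv ℝ (fun z => G (starRingEnd ℂ (z - z₀))) z = _ := h2.fderiv
  rw [h3]
  simp
  ring_nf
  simp
  ring

lemma iterDeriv_analytic {G : ℂ → ℂ} {x : ℂ} (hG : AnalyticAt ℂ G x) (l : ℕ) :
    AnalyticAt ℂ (iteratedDeriv l G) x := by
  induction l with
  | zero => simpa using hG
  | succ l ih => rw [iteratedDeriv_succ]; exact ih.deriv

lemma iter_decomp {f V G : ℂ → ℂ} {z₀ : ℂ} (hV : AnalyticAt ℝ V z₀) (hG : AnalyticAt ℂ G 0)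
    (h : ∀ᶠ z in nhds z₀, f z = (z - z₀) * V z + G (starRingEnd ℂ (z - z₀))) (l : ℕ) :
    ∃ V' : ℂ → ℂ, AnalyticAt ℝ V' z₀ ∧ ∀ᶠ z in nhds z₀, (Dbar2^[l] f) z =
      (z - z₀) * V' z + (-2 * I) ^ l * iteratedDeriv l G (starRingEnd ℂ (z - z₀)) := by
  have t2 : Filter.Tendsto (fun z : ℂ => starRingEnd ℂ (z - z₀)) (nhds z₀) (nhds 0) := by
    have : Continuous fun z : ℂ => starRingEnd ℂ (z - z₀) :=
      continuous_conj.comp (by fun_prop)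
    simpa using this.tendsto z₀
  induction l with
  | zero => exact ⟨V, hV, by simpa using h⟩
  | succ l ih =>
    obtain ⟨V', hV', h'⟩ := ih
    refine ⟨Dbar2 V', dbar_analyticAt hV', ?_⟩
    have hGl : AnalyticAt ℂ (fun z => (-2 * I) ^ l * iteratedDeriv l G z) 0 :=
      analyticAt_const.mul (iterDeriv_analytic hG l)
    rw [Function.iterate_succ_apply']
    have h'' := dbar_congr (z := z₀) h'
    filter_upwards [h'', hV'.eventually_analyticAt,
      t2.eventually hGl.eventually_analyticAt,
      t2.eventually (iterDeriv_analytic hG l).eventually_analyticAt] with z e1 e2 e3 e4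
    rw [e1]
    have d1 : DifferentiableAt ℝ (fun z => z - z₀) z := by fun_prop
    have d2 : DifferentiableAt ℝ
        (fun z => (-2 * I) ^ l * iteratedDeriv l G (starRingEnd ℂ (z - z₀))) z := by
      have a1 := (e3.differentiableAt).restrictScalars ℝ
      have a2 : DifferentiableAt ℝ (fun z : ℂ => starRingEnd ℂ (z - z₀)) z :=
        (conjCLE : ℂ →L[ℝ] ℂ).differentiableAt.comp z d1
      exact DifferentiableAt.comp (g := fun z => (-2 * I) ^ l * iteratedDeriv l G z) z a1 a2
    rw [dbar_add (d1.fun_mul e2.differentiableAt) d2, dbar_mul_s7 d1 e2.differentiableAt, dbar_lin,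
      dbar_conj (G := fun z => (-2 * I) ^ l * iteratedDeriv l G z) e3.differentiableAt,
      deriv_const_mul _ e4.differentiableAt, iteratedDeriv_succ]
    ring

lemma factor {f : ℂ → ℂ} (hf : RealAnalytic f) {z₀ : ℂ} (h0 : ∀ l : ℕ, (Dbar2^[l] f) z₀ = 0) :
    ∃ g : ℂ → ℂ, RealAnalytic g ∧ ∀ z, f z = (z - z₀) * g z := by
  obtain ⟨V, G, hV, hG, h⟩ := decomp (hf z₀)
  have hG0 : ∀ l, iteratedDeriv l G 0 = 0 := fun l => by
    obtain ⟨V', -, h'⟩ := iter_decomp hV hG h l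
    have := h'.self_of_nhds
    rw [h0] at this
    simpa using this.symm
  have hGz : ∀ᶠ y in nhds 0, G y = 0 := by
    have := hG.hasFPowerSeriesAt
    filter_upwards [this.eventually_hasSum] with y hy
    simp only [hG0, zero_add, FormalMultilinearSeries.ofScalars_apply_eq, zero_div, zero_smul] at hy
    exact hy.unique hasSum_zero
  have t2 : Filter.Tendsto (fun z : ℂ => starRingEnd ℂ (z - z₀)) (nhds z₀) (nhds 0) := by
    have : Continuous fun z : ℂ => starRingEnd ℂ (z - z₀) :=
      continuous_conj.comp (by fun_prop)
    simpa using this.tendsto z₀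
  have hl : ∀ᶠ z in nhds z₀, f z = (z - z₀) * V z := by
    filter_upwards [h, t2.eventually hGz] with z a b
    rw [a, b, add_zero]
  classical
  let g : ℂ → ℂ := fun z => if z = z₀ then V z₀ else f z / (z - z₀)
  refine ⟨g, fun z => ?_, fun z => ?_⟩
  · by_cases hz : z = z₀
    · subst hz
      refine hV.congr ?_
      filter_upwards [hl] with y hy
      simp only [g]
      split_ifs with hy'
      · rw [hy']
      · rw [hy]; field_simp [sub_ne_zero.2 hy']
    · have : AnalyticAt ℝ (fun z => f z / (z - z₀)) z :=
        (hf z).div (by fun_prop) (sub_ne_zero.2 hz)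
      refine this.congr ?_
      filter_upwards [isOpen_ne.mem_nhds hz] with y hy
      simp only [g]
      rw [if_neg hy]
  · simp only [g]
    split_ifs with hz
    · rw [hz]
      have := h0 0
      simpa using this
    · field_simp [sub_ne_zero.2 hz]

lemma iter_comb {w₁ w₂ A B C D : ℂ → ℂ} (hw₁ : RealAnalytic w₁) (hw₂ : RealAnalytic w₂)
    (hA : RealAnalytic A) (hB : RealAnalytic B) (hC : RealAnalytic C) (hD : RealAnalytic D)
    (h1 : ∀ z, Dbar2 w₁ z = A z * w₁ z + B z * w₂ z)
    (h2 : ∀ z, Dbar2 w₂ z = C z * w₁ z + D z * w₂ z)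
    {u a b : ℂ → ℂ} (ha : RealAnalytic a) (hb : RealAnalytic b)
    (hu : ∀ z, u z = a z * w₁ z + b z * w₂ z) (l : ℕ) :
    ∃ a' b' : ℂ → ℂ, RealAnalytic a' ∧ RealAnalytic b' ∧
      ∀ z, (Dbar2^[l] u) z = a' z * w₁ z + b' z * w₂ z := by
  induction l with
  | zero => exact ⟨a, b, ha, hb, hu⟩
  | succ l ih =>
    obtain ⟨a', b', ha', hb', h⟩ := ih
    refine ⟨fun z => Dbar2 a' z + a' z * A z + b' z * C z,
      fun z => Dbar2 b' z + a' z * B z + b' z * D z,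
      fun z => ((dbar_analyticAt (ha' z)).add ((ha' z).mul (hA z))).add ((hb' z).mul (hC z)),
      fun z => ((dbar_analyticAt (hb' z)).add ((ha' z).mul (hB z))).add ((hb' z).mul (hD z)),
      fun z => ?_⟩
    rw [Function.iterate_succ_apply', funext h]
    have da := (ha' z).differentiableAt
    have db := (hb' z).differentiableAt
    have d1 := (hw₁ z).differentiableAt
    have d2 := (hw₂ z).differentiableAt
    rw [dbar_add (da.fun_mul d1) (db.fun_mul d2), dbar_mul_s7 da d1, dbar_mul_s7 db d2, h1, h2]
    ring

theorem stmt7 (Uplus Uminus : ℂ → ℂ) (hUp : RealAnalytic Uplus) (hUm : RealAnalytic Uminus)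
    (α k : ℂ) (w₁ w₂ : ℂ → ℂ) (hw₁ : RealAnalytic w₁) (hw₂ : RealAnalytic w₂)
    (heq1 : ∀ z : ℂ, Dbar2 w₁ z + α * Uplus z * w₂ z + k * w₁ z = 0)
    (heq2 : ∀ z : ℂ, α * Uminus z * w₁ z + Dbar2 w₂ z + k * w₂ z = 0)
    (z₀ : ℂ) (hz₀ : w₁ z₀ = 0 ∧ w₂ z₀ = 0) :
    (∀ ℓ : ℕ, (Dbar2^[ℓ] w₁) z₀ = 0 ∧ (Dbar2^[ℓ] w₂) z₀ = 0) ∧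
    ∃ w₀₁ w₀₂ : ℂ → ℂ, RealAnalytic w₀₁ ∧ RealAnalytic w₀₂ ∧
      ∀ z : ℂ, w₁ z = (z - z₀) * w₀₁ z ∧ w₂ z = (z - z₀) * w₀₂ z := by
  have h1 : ∀ z, Dbar2 w₁ z = (-k) * w₁ z + (-(α * Uplus z)) * w₂ z := fun z => by
    linear_combination heq1 z
  have h2 : ∀ z, Dbar2 w₂ z = (-(α * Uminus z)) * w₁ z + (-k) * w₂ z := fun z => by
    linear_combination heq2 z
  have hc : ∀ c : ℂ, RealAnalytic (fun _ => c) := fun c z => analyticAt_const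
  have hp : RealAnalytic (fun z => -(α * Uplus z)) := fun z => (analyticAt_const.mul (hUp z)).neg
  have hm : RealAnalytic (fun z => -(α * Uminus z)) := fun z => (analyticAt_const.mul (hUm z)).neg
  have key : ∀ ℓ : ℕ, (Dbar2^[ℓ] w₁) z₀ = 0 ∧ (Dbar2^[ℓ] w₂) z₀ = 0 := fun ℓ => by
    obtain ⟨a, b, -, -, e1⟩ := iter_comb hw₁ hw₂ (hc (-k)) hp hm (hc (-k)) h1 h2 (hc 1) (hc 0)
      (u := w₁) (fun z => by ring) ℓ
    obtain ⟨c, d, -, -, e2⟩ := iter_comb hw₁ hw₂ (hc (-k)) hp hm (hc (-k)) h1 h2 (hc 0) (hc 1)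
      (u := w₂) (fun z => by ring) ℓ
    rw [e1, e2, hz₀.1, hz₀.2]
    simp
  refine ⟨key, ?_⟩
  obtain ⟨g₁, hg₁, e₁⟩ := factor hw₁ fun l => (key l).1
  obtain ⟨g₂, hg₂, e₂⟩ := factor hw₂ fun l => (key l).2
  exact ⟨g₁, g₂, hg₁, hg₂, fun z => ⟨e₁ z, e₂ z⟩⟩

end
end

section
/- Let H be a complex Hilbert space and let u : ℂ → H be holomorphic with u(k) ≠ 0 for all k ∈ ℂ. Set h(k) := ‖u(k)‖² and φ(k) := u(k)/‖u(k)‖. Then for every k ∈ ℂ, (1/4)·Δ(log h)(k) = −Im⟨∂_{k₁}φ(k), ∂_{k₂}φ(k)⟩, where Δ = ∂²_{k₁} + ∂²_{k₂} in the identification ℂ ≅ ℝ², k = k₁ + ik₂, and the inner product ⟨·,·⟩ is complex linear in its first argument. -/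
open Complex

noncomputable section

/-- The Laplacian `Δ = ∂²_{k₁} + ∂²_{k₂}` of a function on `ℂ ≅ ℝ²`. -/
def lap (f : ℂ → ℝ) : ℂ → ℝ := fun z =>
  fderiv ℝ (fun w => fderiv ℝ f w 1) z 1 +
  fderiv ℝ (fun w => fderiv ℝ f w Complex.I) z Complex.I

/-- The inner product taken complex *linear in the first* argument and conjugate linear in
the second (Mathlib's `inner` is linear in the second argument, so we swap). -/
def innerFirst {H : Type*} [NormedAddCommGroup H] [InnerProductSpace ℂ H] (x y : H) : ℂ :=
  inner (𝕜 := ℂ) y x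

theorem hd_aux {H : Type*} [NormedAddCommGroup H] [InnerProductSpace ℂ H]
    (u : ℂ → H) (hu : Differentiable ℂ u) (z e : ℂ) :
    DifferentiableAt ℝ u z ∧ fderiv ℝ u z e = e • deriv u z := by
  have h := (hu z).hasDerivAt.hasFDerivAt.restrictScalars ℝ
  refine ⟨h.differentiableAt, ?_⟩
  rw [h.fderiv]
  simp

theorem re_aux {H : Type*} [NormedAddCommGroup H] [InnerProductSpace ℂ H]
    (a b : ℂ → H) (ha : Differentiable ℂ a) (hb : Differentiable ℂ b) (z e : ℂ) :
    DifferentiableAt ℝ (fun w => (inner ℂ (a w) (b w)).re) z ∧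
    fderiv ℝ (fun w => (inner ℂ (a w) (b w)).re) z e =
      (inner ℂ (a z) (e • deriv b z) + inner ℂ (e • deriv a z) (b z)).re := by
  have h := (hd_aux a ha z e).1
  have h' := (hd_aux b hb z e).1
  have h1 : DifferentiableAt ℝ (fun w => inner ℂ (a w) (b w)) z := h.inner ℂ h'
  have h2 := Complex.reCLM.hasFDerivAt.comp z h1.hasFDerivAt
  refine ⟨h2.differentiableAt, ?_⟩
  have h3 := congrArg (fun L => L e) h2.fderiv
  have h4 := fderiv_inner_apply ℂ h h' e
  rw [(hd_aux a ha z e).2, (hd_aux b hb z e).2] at h4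
  rw [← h4]
  exact h3

theorem nsq_aux {H : Type*} [NormedAddCommGroup H] [InnerProductSpace ℂ H] (x : H) :
    ‖x‖ ^ 2 = (inner ℂ x x).re := by
  rw [inner_self_eq_norm_sq_to_K]; norm_cast

theorem hsq_aux {H : Type*} [NormedAddCommGroup H] [InnerProductSpace ℂ H]
    (u : ℂ → H) (hu : Differentiable ℂ u) (z e : ℂ) :
    DifferentiableAt ℝ (fun w => ‖u w‖ ^ 2) z ∧
    fderiv ℝ (fun w => ‖u w‖ ^ 2) z e = 2 * (e * inner ℂ (u z) (deriv u z)).re := by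
  simp only [nsq_aux]
  obtain ⟨h1, h2⟩ := re_aux u u hu hu z e
  refine ⟨h1, ?_⟩
  rw [h2, ← inner_conj_symm (e • deriv u z) (u z), inner_smul_right]
  simp only [Complex.add_re, Complex.conj_re]
  ring

theorem log_aux {H : Type*} [NormedAddCommGroup H] [InnerProductSpace ℂ H]
    (u : ℂ → H) (hu : Differentiable ℂ u) (hne : ∀ k : ℂ, u k ≠ 0) (z e : ℂ) :
    fderiv ℝ (fun w => Real.log (‖u w‖ ^ 2)) z e =
      2 * ((inner ℂ (u z) (e • deriv u z)).re * (‖u z‖ ^ 2)⁻¹) := by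
  obtain ⟨h1, h2⟩ := hsq_aux u hu z e
  have hz : ‖u z‖ ^ 2 ≠ 0 := pow_ne_zero _ (norm_ne_zero_iff.2 (hne z))
  rw [(h1.hasFDerivAt.log hz).fderiv]
  simp only [ContinuousLinearMap.smul_apply, h2, smul_eq_mul, inner_smul_right]
  ring

theorem log2_aux {H : Type*} [NormedAddCommGroup H] [InnerProductSpace ℂ H] [CompleteSpace H]
    (u : ℂ → H) (hu : Differentiable ℂ u) (hne : ∀ k : ℂ, u k ≠ 0) (z e : ℂ) :
    fderiv ℝ (fun w => fderiv ℝ (fun w => Real.log (‖u w‖ ^ 2)) w e) z e =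
      2 * ((inner ℂ (u z) (e • e • deriv (deriv u) z)
          + inner ℂ (e • deriv u z) (e • deriv u z)).re * (‖u z‖ ^ 2)⁻¹)
      - 4 * ((e * inner ℂ (u z) (deriv u z)).re * (‖u z‖ ^ 2)⁻¹) ^ 2 := by
  have hv : Differentiable ℂ (deriv u) := by
    have := hu.contDiff (n := 2)
    exact (this.iterate_deriv' 1 1).differentiable (by norm_num)
  simp only [log_aux u hu hne]
  obtain ⟨h1, h2⟩ := hsq_aux u hu z e
  have hz : ‖u z‖ ^ 2 ≠ 0 := pow_ne_zero _ (norm_ne_zero_iff.2 (hne z))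
  obtain ⟨h3, h4⟩ := re_aux u (fun w => e • deriv u w) hu (hv.const_smul e) z e
  have h5 := ((h3.hasFDerivAt.mul ((hasDerivAt_inv hz).comp_hasFDerivAt z h1.hasFDerivAt)).const_mul 2)
  have h6 := congrArg (fun L => L e) h5.fderiv
  refine Eq.trans h6 ?_
  have h7 : deriv (fun w => e • deriv u w) z = e • deriv (deriv u) z :=
    ((hv z).hasDerivAt.const_smul e).deriv
  rw [h7] at h4
  simp only [ContinuousLinearMap.smul_apply, ContinuousLinearMap.add_apply, h2, h4, smul_eq_mul,
    Function.comp]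
  rw [inner_smul_right _ (deriv u z)]
  field_simp
  ring

theorem phi_aux {H : Type*} [NormedAddCommGroup H] [InnerProductSpace ℂ H]
    (u : ℂ → H) (hu : Differentiable ℂ u) (hne : ∀ k : ℂ, u k ≠ 0) (z e : ℂ) :
    fderiv ℝ (fun w => ‖u w‖⁻¹ • u w) z e =
      ((‖u z‖⁻¹ : ℝ) : ℂ) • (e • deriv u z) -
       (((e * inner ℂ (u z) (deriv u z)).re * (‖u z‖⁻¹) ^ 3 : ℝ) : ℂ) • u z := by
  obtain ⟨h1, h2⟩ := hsq_aux u hu z e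
  obtain ⟨h3, h4⟩ := hd_aux u hu z e
  have hn : ‖u z‖ ≠ 0 := norm_ne_zero_iff.2 (hne z)
  have hz : ‖u z‖ ^ 2 ≠ 0 := pow_ne_zero _ hn
  have h5 := h1.hasFDerivAt.sqrt hz
  simp only [Real.sqrt_sq (norm_nonneg _)] at h5
  have h6 := ((hasDerivAt_inv hn).comp_hasFDerivAt z h5).smul h3.hasFDerivAt
  refine Eq.trans (congrArg (fun L => L e) h6.fderiv) ?_
  simp only [ContinuousLinearMap.smul_apply, ContinuousLinearMap.add_apply, h2, h4, smul_eq_mul,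
    Function.comp, ContinuousLinearMap.smulRight_apply, Complex.coe_smul, sub_eq_add_neg, ← neg_smul]
  congr 2
  field_simp

theorem stmt15 {H : Type*} [NormedAddCommGroup H] [InnerProductSpace ℂ H] [CompleteSpace H]
    (u : ℂ → H) (hu : Differentiable ℂ u) (hne : ∀ k : ℂ, u k ≠ 0) :
    ∀ k : ℂ,
      (1 / 4) * lap (fun w => Real.log (‖u w‖ ^ 2)) k =
        -(innerFirst
            (fderiv ℝ (fun w => ‖u w‖⁻¹ • u w) k 1)
            (fderiv ℝ (fun w => ‖u w‖⁻¹ • u w) k Complex.I)).im := by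
  intro k
  have hn : ‖u k‖ ≠ 0 := norm_ne_zero_iff.2 (hne k)
  unfold lap innerFirst
  rw [log2_aux u hu hne, log2_aux u hu hne, phi_aux u hu hne, phi_aux u hu hne]
  have hs : inner ℂ (deriv u k) (u k) = (starRingEnd ℂ) (inner ℂ (u k) (deriv u k)) :=
    (inner_conj_symm _ _).symm
  have huu : inner ℂ (u k) (u k) = ((‖u k‖ ^ 2 : ℝ) : ℂ) := by
    rw [inner_self_eq_norm_sq_to_K]; norm_cast
  have hvv : inner ℂ (deriv u k) (deriv u k) = ((‖deriv u k‖ ^ 2 : ℝ) : ℂ) := by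
    rw [inner_self_eq_norm_sq_to_K]; norm_cast
  simp only [inner_sub_left, inner_sub_right, inner_smul_left, inner_smul_right, hs, huu, hvv]
  generalize inner ℂ (u k) (deriv u k) = c
  generalize inner ℂ (u k) (deriv (deriv u) k) = d
  generalize ‖deriv u k‖ = q
  generalize ‖u k‖ = n at *
  obtain ⟨x, y⟩ := c
  obtain ⟨s, t⟩ := d
  simp only [Complex.add_re, Complex.sub_re, Complex.mul_re, Complex.mul_im, Complex.add_im,
    Complex.sub_im, Complex.I_re, Complex.I_im, Complex.one_re, Complex.one_im, Complex.ofReal_re,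
    Complex.ofReal_im, Complex.conj_re, Complex.conj_im]
  field_simp
  ring

end
end
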